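/- Let s be an even integer with s ≥ 6. Then: (i) ‖f_0‖_∞ = 1 on [−1,1], and the function equal to f_0 on (−1,1) and to 0 outside has total variation 2s on ℝ; (ii) the total variation of f_1 on [−1,1] equals 2 and ‖f_1‖_∞ = |f_1(0)| = tan(π/(2s)). -/

import Mathlib

noncomputable section

/-- iterated integrals of the sign of the Chebyshev polynomial: the perfect B-spline chain -/
def fspline (s : ℕ) : ℕ → ℝ → ℝ
  | 0 => fun x => (-1 : ℝ) ^ (s - 1) * Real.sign ((Polynomial.Chebyshev.U ℝ ((s : ℤ) - 1)).eval x)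
  | (k + 1) => fun x => ∫ t in (-1 : ℝ)..x, fspline s k t

/-- the scaled perfect B-spline g̃_{s-1} -/
def gtilde (s : ℕ) (x : ℝ) : ℝ := fspline s (s - 1) (2 * x)

/-- discrete norm ‖g̃‖_{1,N} -/
def gnorm (s N : ℕ) : ℝ :=
  ∑ k ∈ Finset.Icc (-(N : ℤ)) (N : ℤ), gtilde s ((k : ℝ) / (2 * ((N : ℝ) + 1)))

/-- the trigonometric kernel σ̃_N (real-valued) -/
def sigmaT (s N : ℕ) (t : ℝ) : ℝ :=
  ((1 / (gnorm s N : ℂ)) *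
      ∑ k ∈ Finset.Icc (-(N : ℤ)) (N : ℤ),
        (gtilde s ((k : ℝ) / (2 * ((N : ℝ) + 1))) : ℂ) * Complex.exp ((k : ℂ) * t * Complex.I)).re

/-- constants c_{l,s} -/
def cConst : ℕ → ℕ → ℝ
  | 0, s => 1.02 * (Nat.factorial (s - 1)) * 2 ^ s * s
  | 1, s => 1.02 * (Nat.factorial (s - 1)) * 2 ^ s * (2 * s)
  | 2, s => 1.02 * (Nat.factorial (s - 1)) * 2 ^ s * (4 * s + 1)
  | _, s => 1.02 * (Nat.factorial (s - 1)) * 2 ^ s * (9 * s - 2)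

end

open scoped Real

lemma var_neg_aux (f : ℝ → ℝ) (S : Set ℝ) : eVariationOn (fun x => - f x) S = eVariationOn f S := by
  simp [eVariationOn, edist_neg_neg]

lemma var_mono_aux {f : ℝ → ℝ} {a b : ℝ} (hab : a ≤ b) (h : MonotoneOn f (Set.Icc a b)) :
    eVariationOn f (Set.Icc a b) = ENNReal.ofReal (f b - f a) := by
  have := h.eVariationOn_eq (Set.left_mem_Icc.2 hab) (Set.right_mem_Icc.2 hab)
  rwa [Set.inter_self] at this

lemma var_add_aux (f : ℝ → ℝ) {a b c : ℝ} (hab : a ≤ b) (hbc : b ≤ c) :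
    eVariationOn f (Set.Icc a c) = eVariationOn f (Set.Icc a b) + eVariationOn f (Set.Icc b c) := by
  have := eVariationOn.Icc_add_Icc f (s := Set.univ) hab hbc (Set.mem_univ _)
  simpa using this.symm

lemma var_bump_pos {h : ℝ → ℝ} {a b : ℝ} (hab : a < b) (ha : h a = 0) (hb : h b = 0)
    (hm : ∀ x ∈ Set.Ioo a b, h x = 1) : eVariationOn h (Set.Icc a b) = 2 := by
  have hmid : h ((a+b)/2) = 1 := hm _ ⟨by linarith, by linarith⟩
  rw [var_add_aux h (b := (a+b)/2) (by linarith) (by linarith)]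
  have e1 : eVariationOn h (Set.Icc a ((a+b)/2)) = 1 := by
    rw [var_mono_aux (by linarith)]
    · simp [hmid, ha]
    · intro x hx y hy hxy
      rcases eq_or_lt_of_le hx.1 with e | e
      · rcases eq_or_lt_of_le hy.1 with e' | e'
        · rw [← e, ← e']
        · rw [← e, ha, hm y ⟨e', by linarith [hy.2]⟩]; norm_num
      · rw [hm x ⟨e, by linarith [hx.2]⟩, hm y ⟨by linarith, by linarith [hy.2]⟩]
  have e2 : eVariationOn h (Set.Icc ((a+b)/2) b) = 1 := by
    rw [← var_neg_aux, var_mono_aux (by linarith)]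
    · simp [hmid, hb]
    · intro x hx y hy hxy
      simp only
      rcases eq_or_lt_of_le hy.2 with e | e
      · rcases eq_or_lt_of_le hx.2 with e' | e'
        · rw [e, e']
        · rw [e, hb, hm x ⟨by linarith [hx.1], e'⟩]; norm_num
      · rw [hm x ⟨by linarith [hx.1], by linarith⟩, hm y ⟨by linarith [hy.1], e⟩]
  rw [e1, e2]; norm_num

lemma var_bump {h : ℝ → ℝ} {a b : ℝ} (k : ℕ) (hab : a < b) (ha : h a = 0) (hb : h b = 0)
    (hm : ∀ x ∈ Set.Ioo a b, h x = (-1) ^ k) : eVariationOn h (Set.Icc a b) = 2 := by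
  rcases neg_one_pow_eq_or ℝ k with e | e <;> rw [e] at hm
  · exact var_bump_pos hab ha hb hm
  · rw [← var_neg_aux]
    exact var_bump_pos hab (by simp [ha]) (by simp [hb]) (fun x hx => by rw [hm x hx]; norm_num)

lemma var_lin {h : ℝ → ℝ} {a b : ℝ} (k : ℕ) (hab : a ≤ b)
    (hm : ∀ x ∈ Set.Icc a b, h x = h a + (-1) ^ k * (x - a)) :
    eVariationOn h (Set.Icc a b) = ENNReal.ofReal (b - a) := by
  rcases neg_one_pow_eq_or ℝ k with e | e <;> rw [e] at hm
  · rw [var_mono_aux hab]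
    · rw [hm b ⟨hab, le_rfl⟩]; congr 1; ring
    · intro x hx y hy hxy
      rw [hm x hx, hm y hy]; linarith
  · rw [← var_neg_aux, var_mono_aux hab]
    · rw [hm b ⟨hab, le_rfl⟩]; congr 1; ring
    · intro x hx y hy hxy
      simp only
      rw [hm x hx, hm y hy]; linarith

/-- nodes -/
noncomputable def nodeX (s k : ℕ) : ℝ := -Real.cos (k * (π / s))

lemma nodeX_zero (s : ℕ) : nodeX s 0 = -1 := by simp [nodeX]

lemma nodeX_last {s : ℕ} (hs : 0 < s) : nodeX s s = 1 := by
  have : (s : ℝ) * (π / s) = π := by field_simp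
  simp [nodeX, this]

lemma node_le {s k : ℕ} (hs : 0 < s) (hk : k ≤ s) : (k : ℝ) * (π / s) ≤ π := by
  have h : (s : ℝ) * (π / s) = π := by field_simp
  have h2 : (k : ℝ) ≤ s := by exact_mod_cast hk
  have h3 : 0 ≤ π / s := by positivity
  nlinarith

lemma nodeX_lt {s k l : ℕ} (hs : 0 < s) (hk : k < l) (hl : l ≤ s) :
    nodeX s k < nodeX s l := by
  have h3 : 0 < π / s := by have := Real.pi_pos; positivity
  have h2 : (k : ℝ) < l := by exact_mod_cast hk
  have := Real.cos_lt_cos_of_nonneg_of_le_pi (x := k * (π / s)) (y := l * (π / s)) (by positivity)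
    (node_le hs hl) (by gcongr)
  simp only [nodeX]; linarith

lemma nodeX_le {s k l : ℕ} (hs : 0 < s) (hk : k ≤ l) (hl : l ≤ s) :
    nodeX s k ≤ nodeX s l := by
  rcases hk.eq_or_lt with rfl | h
  · exact le_rfl
  · exact (nodeX_lt hs h hl).le

lemma U_node {s : ℕ} (hs_even : Even s) (ψ : ℝ) :
    (Polynomial.Chebyshev.U ℝ ((s : ℤ) - 1)).eval (-Real.cos ψ) * Real.sin ψ
      = - Real.sin (s * ψ) := by
  have h := Polynomial.Chebyshev.U_real_cos (π - ψ) ((s : ℤ) - 1)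
  rw [Real.cos_pi_sub, Real.sin_pi_sub] at h
  rw [h]
  push_cast
  obtain ⟨m, rfl⟩ := hs_even
  have : ((((m + m : ℕ) : ℝ) - 1 + 1) * (π - ψ)) = -(((m + m : ℕ) : ℝ) * ψ) + m * (2 * π) := by
    push_cast; ring
  push_cast at this ⊢
  rw [this, Real.sin_add_nat_mul_two_pi, Real.sin_neg]

lemma f0_node {s k : ℕ} (hs_even : Even s) (hk : 0 < k) (hks : k < s) :
    fspline s 0 (nodeX s k) = 0 := by
  have hs : 0 < s := by omega
  have h := U_node hs_even (k * (π / s))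
  have h1 : (s : ℝ) * (k * (π / s)) = k * π := by field_simp
  rw [h1, Real.sin_nat_mul_pi] at h
  have h3 : 0 < π / s := by have := Real.pi_pos; positivity
  have h2 : (k : ℝ) * (π / s) < π := by
    have h : (s : ℝ) * (π / s) = π := by field_simp
    have h2 : (k : ℝ) < s := by exact_mod_cast hks
    nlinarith
  have hsin : 0 < Real.sin (k * (π / s)) := Real.sin_pos_of_pos_of_lt_pi (by positivity) h2
  have : (Polynomial.Chebyshev.U ℝ ((s : ℤ) - 1)).eval (nodeX s k) = 0 := by
    simp only [nodeX]
    rcases mul_eq_zero.1 (h.trans neg_zero) with h | h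
    · exact h
    · exact absurd h hsin.ne'
  simp [fspline, this]

lemma f0_between {s k : ℕ} (hs_even : Even s) (hks : k < s) {x : ℝ}
    (hx : x ∈ Set.Ioo (nodeX s k) (nodeX s (k + 1))) : fspline s 0 x = (-1) ^ k := by
  have hs : 0 < s := by omega
  have hsR : (0 : ℝ) < s := by exact_mod_cast hs
  have hodd : Odd (s - 1) := Nat.Even.sub_odd (by omega) hs_even odd_one
  have h3 : 0 < π / s := by have := Real.pi_pos; positivity
  obtain ⟨hx1, hx2⟩ := hx
  have b1 : -1 ≤ nodeX s k := by simp only [nodeX]; linarith [Real.cos_le_one (k * (π / s))]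
  have b2 : nodeX s (k+1) ≤ 1 := by
    simp only [nodeX]; linarith [Real.neg_one_le_cos ((k+1 : ℕ) * (π / s))]
  set ψ := Real.arccos (-x) with hψ
  have hc : Real.cos ψ = -x := Real.cos_arccos (by linarith) (by linarith)
  have hψ0 : 0 ≤ ψ := Real.arccos_nonneg _
  have hψ1 : ψ ≤ π := Real.arccos_le_pi _
  have l1 : k * (π / s) < ψ := by
    by_contra hcon
    have := Real.cos_le_cos_of_nonneg_of_le_pi hψ0 (node_le hs hks.le) (not_lt.1 hcon)
    simp only [nodeX] at hx1; linarith
  have l2 : ψ < (k + 1 : ℕ) * (π / s) := by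
    by_contra hcon
    have := Real.cos_le_cos_of_nonneg_of_le_pi (by positivity) hψ1 (not_lt.1 hcon)
    simp only [nodeX] at hx2; linarith
  have hsinψ : 0 < Real.sin ψ := Real.sin_pos_of_pos_of_lt_pi
    (lt_of_le_of_lt (by positivity) l1) (lt_of_lt_of_le l2 (node_le hs hks))
  have hU := U_node hs_even ψ
  rw [hc, neg_neg] at hU
  have m1 : k * π < s * ψ := by
    have := mul_lt_mul_of_pos_left l1 hsR
    have e : (s : ℝ) * (k * (π / s)) = k * π := by field_simp
    linarith
  have m2 : s * ψ < (k + 1) * π := by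
    have := mul_lt_mul_of_pos_left l2 hsR
    have e : (s : ℝ) * ((k + 1 : ℕ) * (π / s)) = (k + 1) * π := by push_cast; field_simp
    linarith
  have hp : 0 < Real.sin (s * ψ - k * π) :=
    Real.sin_pos_of_pos_of_lt_pi (by linarith) (by linarith)
  rw [Real.sin_sub_nat_mul_pi] at hp
  simp only [fspline, hodd.neg_one_pow]
  rcases neg_one_pow_eq_or ℝ k with e | e <;> rw [e] at hp ⊢
  · rw [Real.sign_of_neg]
    · norm_num
    · by_contra hcon
      have := mul_nonneg (not_lt.1 hcon) hsinψ.le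
      linarith
  · rw [Real.sign_of_pos]
    · norm_num
    · by_contra hcon
      have := mul_nonpos_of_nonpos_of_nonneg (not_lt.1 hcon) hsinψ.le
      linarith

lemma abs_f0_le (s : ℕ) (x : ℝ) : |fspline s 0 x| ≤ 1 := by
  simp only [fspline, abs_mul, abs_pow, abs_neg, abs_one, one_pow, one_mul]
  rcases Real.sign_apply_eq ((Polynomial.Chebyshev.U ℝ ((s : ℤ) - 1)).eval x) with h | h | h <;>
    rw [h] <;> norm_num

lemma f0_meas (s : ℕ) : Measurable (fspline s 0) := by
  have h : Measurable Real.sign := by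
    unfold Real.sign
    exact Measurable.ite measurableSet_Iio measurable_const
      (Measurable.ite measurableSet_Ioi measurable_const measurable_const)
  simp only [fspline]
  exact (h.comp (Polynomial.continuous _).measurable).const_mul _

lemma f0_int (s : ℕ) (a b : ℝ) : IntervalIntegrable (fspline s 0) MeasureTheory.volume a b := by
  refine (intervalIntegrable_const (c := (1 : ℝ))).mono_fun (f0_meas s).aestronglyMeasurable ?_
  refine Filter.Eventually.of_forall fun x => ?_
  simpa using abs_f0_le s x

lemma f1_lin {s k : ℕ} (hs_even : Even s) (hks : k < s) {x : ℝ}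
    (hx : x ∈ Set.Icc (nodeX s k) (nodeX s (k + 1))) :
    fspline s 1 x = fspline s 1 (nodeX s k) + (-1) ^ k * (x - nodeX s k) := by
  have e : fspline s 1 = fun x => ∫ t in (-1 : ℝ)..x, fspline s 0 t := rfl
  rw [e]
  simp only
  rw [← intervalIntegral.integral_add_adjacent_intervals (f0_int s (-1) (nodeX s k))
    (f0_int s (nodeX s k) x)]
  congr 1
  rw [intervalIntegral.integral_congr_ae (g := fun _ => (-1 : ℝ) ^ k)]
  · simp [mul_comm]
  · have : ∀ᵐ y : ℝ, y ≠ nodeX s (k+1) := by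
      simp [MeasureTheory.ae_iff]
    filter_upwards [this] with y hy hy2
    rw [Set.uIoc_of_le hx.1] at hy2
    exact f0_between hs_even hks ⟨hy2.1, lt_of_le_of_ne (hy2.2.trans hx.2) hy⟩

lemma f1_node {s : ℕ} (hs_even : Even s) (hs : 6 ≤ s) (k : ℕ) (hk : k ≤ s) :
    fspline s 1 (nodeX s k) = - (-1) ^ k * (Real.tan (π / (2 * s)) * Real.sin (k * (π / s))) := by
  induction k with
  | zero => simp [fspline, nodeX]
  | succ k ih =>
    have hlt := nodeX_lt (s := s) (by omega) (Nat.lt_succ_self k) hk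
    rw [f1_lin hs_even (by omega) (Set.right_mem_Icc.2 hlt.le), ih (by omega)]
    have hsR : (6 : ℝ) ≤ s := by exact_mod_cast hs
    set a := π / (2 * s) with ha
    have e : π / s = 2 * a := by rw [ha]; field_simp
    have ha0 : 0 < a := by have := Real.pi_pos; positivity
    have ha1 : a < π / 2 := by
      rw [ha]; have := Real.pi_pos
      apply div_lt_div_of_pos_left this (by norm_num); linarith
    have hcos : 0 < Real.cos a := Real.cos_pos_of_mem_Ioo ⟨by linarith, ha1⟩
    simp only [nodeX]
    rw [e, Real.tan_eq_sin_div_cos]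
    set b := (2 * k + 1) * a with hb
    have e1 : (k : ℝ) * (2 * a) = b - a := by rw [hb]; ring
    have e2 : ((k + 1 : ℕ) : ℝ) * (2 * a) = b + a := by rw [hb]; push_cast; ring
    rw [e1, e2, Real.cos_add, Real.cos_sub, Real.sin_add, Real.sin_sub]
    field_simp
    ring

lemma exists_cell {s : ℕ} {x : ℝ} (n : ℕ) (h0 : nodeX s 0 ≤ x) (hn : x ≤ nodeX s n) (hn0 : 0 < n) :
    ∃ k < n, x ∈ Set.Icc (nodeX s k) (nodeX s (k + 1)) := by
  induction n with
  | zero => omega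
  | succ n ih =>
    rcases le_total (nodeX s n) x with h | h
    · exact ⟨n, by omega, h, hn⟩
    · rcases Nat.eq_zero_or_pos n with rfl | hp
      · exact ⟨0, by omega, h0, hn⟩
      · obtain ⟨k, hk, hx⟩ := ih h hp
        exact ⟨k, by omega, hx⟩

theorem sup_norm_and_variation_of_f0_and_f1
    (s : ℕ) (hs_even : Even s) (hs : 6 ≤ s) :
    (⨆ x : Set.Icc (-1 : ℝ) 1, |fspline s 0 x|) = 1 ∧
    eVariationOn (fun x : ℝ => if x ∈ Set.Ioo (-1 : ℝ) 1 then fspline s 0 x else 0)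
        Set.univ = (2 * s : ℕ) ∧
    eVariationOn (fspline s 1) (Set.Icc (-1 : ℝ) 1) = 2 ∧
    (⨆ x : Set.Icc (-1 : ℝ) 1, |fspline s 1 x|) = |fspline s 1 0| ∧
    |fspline s 1 0| = Real.tan (π / (2 * s)) := by
  have hs0 : 0 < s := by omega
  have hsR : (6 : ℝ) ≤ s := by exact_mod_cast hs
  have hT : 0 < Real.tan (π / (2 * s)) := by
    have := Real.pi_pos
    apply Real.tan_pos_of_pos_of_lt_pi_div_two (by positivity)
    apply div_lt_div_of_pos_left this (by norm_num); linarith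
  have hnb : ∀ k ≤ s, |fspline s 1 (nodeX s k)| ≤ Real.tan (π / (2 * s)) := by
    intro k hk
    rw [f1_node hs_even hs k hk]
    simp only [abs_mul, abs_neg, abs_pow, abs_one, one_pow, one_mul, abs_of_pos hT]
    have := Real.abs_sin_le_one (k * (π / s))
    nlinarith
  have hzero : |fspline s 1 0| = Real.tan (π / (2 * s)) := by
    obtain ⟨m, rfl⟩ := hs_even
    have hm : (0 : ℝ) < m := by exact_mod_cast (by omega : 0 < m)
    have e : (m : ℝ) * (π / ((m + m : ℕ) : ℝ)) = π / 2 := by push_cast; field_simp; norm_num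
    have h := f1_node ⟨m, rfl⟩ hs m (by omega)
    have e2 : nodeX (m + m) m = 0 := by rw [nodeX, e]; simp
    rw [e2, e] at h
    rw [h]
    simp only [abs_mul, abs_neg, abs_pow, abs_one, one_pow, one_mul, abs_of_pos hT,
      Real.sin_pi_div_two, mul_one]
  have hb : ∀ x ∈ Set.Icc (-1 : ℝ) 1, |fspline s 1 x| ≤ Real.tan (π / (2 * s)) := by
    intro x hx
    obtain ⟨k, hk, hxk⟩ := exists_cell (s := s) (x := x) s (by rw [nodeX_zero]; exact hx.1)
      (by rw [nodeX_last hs0]; exact hx.2) hs0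
    have h1 := f1_lin hs_even hk hxk
    have h2 := f1_lin hs_even hk (Set.right_mem_Icc.2 (hxk.1.trans hxk.2))
    have n1 := abs_le.1 (hnb k hk.le)
    have n2 := abs_le.1 (hnb (k+1) hk)
    obtain ⟨x1, x2⟩ := hxk
    rw [abs_le]
    rcases neg_one_pow_eq_or ℝ k with e | e <;> rw [e] at h1 h2 <;> constructor <;> linarith
  refine ⟨?_, ?_, ?_, ?_, hzero⟩
  · have : Nonempty (Set.Icc (-1 : ℝ) 1) := ⟨⟨1, by norm_num⟩⟩
    apply le_antisymm
    · exact ciSup_le fun x => abs_f0_le s x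
    · have h1 : |fspline s 0 1| = 1 := by
        have : (0 : ℝ) < s := by linarith
        simp [fspline, Real.sign_of_pos this]
      have hbd : BddAbove (Set.range fun x : Set.Icc (-1 : ℝ) 1 => |fspline s 0 x|) :=
        ⟨1, by rintro _ ⟨x, rfl⟩; exact abs_f0_le s x⟩
      have := le_ciSup hbd ⟨1, by norm_num⟩
      simpa [h1] using this
  · set g : ℝ → ℝ := fun x => if x ∈ Set.Ioo (-1 : ℝ) 1 then fspline s 0 x else 0 with hg
    have gn : ∀ k ≤ s, g (nodeX s k) = 0 := by
      intro k hk
      rcases Nat.eq_zero_or_pos k with rfl | hp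
      · simp [hg, nodeX_zero]
      · rcases hk.eq_or_lt with rfl | hlt
        · simp [hg, nodeX_last hs0]
        · simp only [hg, f0_node hs_even hp hlt, ite_self]
    have gv : ∀ k ≤ s, eVariationOn g (Set.Icc (nodeX s 0) (nodeX s k)) = (2 * k : ℕ) := by
      intro k hk
      induction k with
      | zero => simp
      | succ k ih =>
        rw [var_add_aux g (nodeX_le hs0 (Nat.zero_le k) (by omega))
          (nodeX_le hs0 (Nat.le_succ k) hk), ih (by omega),
          var_bump k (nodeX_lt hs0 (Nat.lt_succ_self k) hk) (gn k (by omega)) (gn _ hk)]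
        · push_cast; ring
        · intro x hx
          have a1 := nodeX_le hs0 (Nat.zero_le k) (by omega : k ≤ s)
          have a2 := nodeX_le hs0 hk le_rfl
          rw [nodeX_zero] at a1
          rw [nodeX_last hs0] at a2
          have : x ∈ Set.Ioo (-1 : ℝ) 1 := ⟨lt_of_le_of_lt a1 hx.1, lt_of_lt_of_le hx.2 a2⟩
          simp only [hg, if_pos this]
          exact f0_between hs_even (by omega) hx
    have gs := gv s le_rfl
    rw [nodeX_zero, nodeX_last hs0] at gs
    have c1 : eVariationOn g (Set.Iic (-1)) = 0 := by
      apply eVariationOn.constant_on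
      rintro _ ⟨x, hx, rfl⟩ _ ⟨y, hy, rfl⟩
      have hx' : ¬ (-1 < x) := not_lt.2 hx
      have hy' : ¬ (-1 < y) := not_lt.2 hy
      simp [hg, hx', hy']
    have c2 : eVariationOn g (Set.Ici 1) = 0 := by
      apply eVariationOn.constant_on
      rintro _ ⟨x, hx, rfl⟩ _ ⟨y, hy, rfl⟩
      have hx' : ¬ (x < 1) := not_lt.2 hx
      have hy' : ¬ (y < 1) := not_lt.2 hy
      simp [hg, hx', hy']
    have u1 : eVariationOn g (Set.Iic 1) = (2 * s : ℕ) := by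
      have := eVariationOn.union g (s := Set.Iic (-1)) (t := Set.Icc (-1) 1) (x := -1)
        isGreatest_Iic (isLeast_Icc (by norm_num))
      rw [Set.Iic_union_Icc_eq_Iic (by norm_num)] at this
      rw [this, c1, gs, zero_add]
    have := eVariationOn.union g (s := Set.Iic 1) (t := Set.Ici 1) (x := 1)
        isGreatest_Iic isLeast_Ici
    rw [Set.Iic_union_Ici] at this
    rw [this, u1, c2, add_zero]
  · have fv : ∀ k ≤ s, eVariationOn (fspline s 1) (Set.Icc (nodeX s 0) (nodeX s k))
        = ENNReal.ofReal (nodeX s k - nodeX s 0) := by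
      intro k hk
      induction k with
      | zero => simp
      | succ k ih =>
        have i1 := nodeX_le hs0 (Nat.zero_le k) (by omega : k ≤ s)
        have i2 := nodeX_le hs0 (Nat.le_succ k) hk
        rw [var_add_aux _ i1 i2, ih (by omega),
          var_lin k i2 (fun x hx => f1_lin hs_even (by omega) hx),
          ← ENNReal.ofReal_add (by linarith) (by linarith)]
        congr 1; ring
    have := fv s le_rfl
    rw [nodeX_zero, nodeX_last hs0] at this
    rw [this]
    norm_num
  · have : Nonempty (Set.Icc (-1 : ℝ) 1) := ⟨⟨1, by norm_num⟩⟩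
    apply le_antisymm
    · rw [hzero]; exact ciSup_le fun x => hb x x.2
    · have hbd : BddAbove (Set.range fun x : Set.Icc (-1 : ℝ) 1 => |fspline s 1 x|) :=
        ⟨_, by rintro _ ⟨x, rfl⟩; exact hb x x.2⟩
      exact le_ciSup hbd ⟨0, by norm_num⟩
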